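/- Let Ω be a nonempty closed convex cone of H₂ and K(u) := φ₀(u) + Ω for a map φ₀ : Ω → Ω. Assume (H₁)–(H₄) and (H₅') hold and L < 1, where L := (2·l_K²/η_G²)(l_G·√(4l_G²+2η_G²) + 2l_G² + η_G²), and let (x,u) ∈ C(I,H₁) × C(I,Ω) be the unique solution of the nonlocal fractional differential quasi-complementarity problem. Let φ ∈ C(I,ℝ₊) be nondecreasing and suppose z ∈ C(I,H₁), υ ∈ C(I,Ω) and h ∈ C(I,H₁) satisfy: ‖h(s)‖ ≤ φ(s) for all s ∈ I; z(s) = z(0) + (1/Γ(q))·∫₀^s (s−ζ)^{q−1}[f(ζ,z(ζ)) + g(ζ,z(ζ),υ(ζ)) + h(ζ)] dζ for all s ∈ I; for all s ∈ I, υ(s) ∈ φ₀(υ(s)) + Ω, G(s,z(s),υ(s)) ∈ Ω* and ⟨G(s,z(s),υ(s)), υ(s) − φ₀(υ(s))⟩ = 0; and z(0) = x₀ + ψ(x). Then ‖z(s) − x(s)‖ ≤ (T^q/Γ(q+1))·φ(s)·E_q((l_f + ξ)·s^q) for all s ∈ I, where ξ := l_g(1+√(κ/(1−L))) and Ω* :=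 {w ∈ H₂ : ⟨w,v⟩ ≥ 0 for all v ∈ Ω}. -/

import Mathlib

/-!
The proof combines a stability estimate for the quasi-variational inequality with a fractional
Gronwall inequality.

Over the cone `Ω`, complementarity says that `u(s)` solves the variational inequality for
`G(s, x(s), ·)` on `K(u(s))`. Comparing the solutions `u(s)` and `υ(s)` through the projection of
`u(s) - ρ G(s, x(s), u(s))` onto `K(υ(s))`, and letting `ρ → ∞`, gives
`η d ≤ l D + lK (η + l) d` with `d = ‖υ(s) - u(s)‖` and `D = ‖z(s) - x(s)‖` (`qvi_sensitivity`).
Young's inequality turns this into `d ≤ √(κ/(1-L)) D` (`le_sqrt_kconst_mul`).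

Since `z(0) = x₀ + ψ(x)`, subtracting the two integral equations leaves
`‖z(s) - x(s)‖ ≤ Γ(q)⁻¹ ∫₀ˢ (s-ζ)^(q-1) ((lf + ξ) ‖z(ζ) - x(ζ)‖ + φ(ζ)) dζ`. On `[0, S]` the forcing
term contributes at most `φ(S) T^q / Γ(q+1)`, as `φ` is nondecreasing. Iterating the inequality
with the Beta integral (`kernel_mlTerm`) produces the partial sums of the Mittag-Leffler series,
and the remainder vanishes because that series converges (`fractional_gronwall`, `summable_mlE`).
-/

open scoped RealInnerProductSpace
open Set

/-- Metric projection onto a set `C` of a real Hilbert space, characterized by the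
variational inequality `⟪w - x, v - w⟫ ≥ 0` for all `v ∈ C`. -/
noncomputable def proj {H : Type*} [NormedAddCommGroup H] [InnerProductSpace ℝ H]
    (C : Set H) (x : H) : H :=
  letI : Nonempty H := ⟨0⟩
  Classical.epsilon fun w => w ∈ C ∧ ∀ v ∈ C, 0 ≤ ⟪w - x, v - w⟫

/-- The constant `L = (2 l_K²/η_G²)(l_G √(4l_G²+2η_G²) + 2l_G² + η_G²)`. -/
noncomputable def Lconst (lK lG ηG : ℝ) : ℝ :=
  2 * lK ^ 2 / ηG ^ 2 * (lG * Real.sqrt (4 * lG ^ 2 + 2 * ηG ^ 2) + 2 * lG ^ 2 + ηG ^ 2)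

/-- The constant `κ = 2 l_G (√(l_G²+η_G²/2)+l_G)² / (η_G² √(l_G²+η_G²/2))`. -/
noncomputable def kconst (lG ηG : ℝ) : ℝ :=
  2 * lG * (Real.sqrt (lG ^ 2 + ηG ^ 2 / 2) + lG) ^ 2 /
    (ηG ^ 2 * Real.sqrt (lG ^ 2 + ηG ^ 2 / 2))

/-- The constant `ξ = l_g (1 + √(κ/(1-L)))`. -/
noncomputable def xiconst (lg lK lG ηG : ℝ) : ℝ :=
  lg * (1 + Real.sqrt (kconst lG ηG / (1 - Lconst lK lG ηG)))

/-- The Mittag-Leffler function `E_q(t) = ∑_{n=0}^∞ tⁿ/Γ(nq+1)`. -/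
noncomputable def mlE (q t : ℝ) : ℝ := ∑' n : ℕ, t ^ n / Real.Gamma (n * q + 1)

/-- `(x, u)` is a solution of the nonlocal fractional differential
quasi-complementarity problem (NFDQCP), in the integrated sense. -/
def IsNFDQCPSol {H₁ H₂ : Type*} [NormedAddCommGroup H₁] [InnerProductSpace ℝ H₁]
    [NormedAddCommGroup H₂] [InnerProductSpace ℝ H₂]
    (T q : ℝ) (x₀ : H₁) (ψ : (ℝ → H₁) → H₁) (f : ℝ → H₁ → H₁)
    (g : ℝ → H₁ → H₂ → H₁) (G : ℝ → H₁ → H₂ → H₂) (Ω : Set H₂) (φ₀ : H₂ → H₂)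
    (x : ℝ → H₁) (u : ℝ → H₂) : Prop :=
  ContinuousOn x (Icc 0 T) ∧ ContinuousOn u (Icc 0 T) ∧
  (∀ s ∈ Icc (0:ℝ) T, u s ∈ Ω) ∧
  (∀ s ∈ Icc (0:ℝ) T,
    x s = x₀ + ψ x + (Real.Gamma q)⁻¹ •
      ∫ ζ in (0:ℝ)..s, ((s - ζ) ^ (q - 1)) • (f ζ (x ζ) + g ζ (x ζ) (u ζ))) ∧
  (∀ s ∈ Icc (0:ℝ) T,
    u s ∈ (fun w => φ₀ (u s) + w) '' Ω ∧
    (∀ v ∈ Ω, 0 ≤ ⟪G s (x s) (u s), v⟫) ∧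
    ⟪G s (x s) (u s), u s - φ₀ (u s)⟫ = 0)

/-! ### The Mittag-Leffler series and the fractional kernel -/

theorem integral_kernel_mul_rpow {q a s : ℝ} (hq : 0 < q) (ha : 0 ≤ a) (hs : 0 ≤ s) :
    ∫ ζ in (0:ℝ)..s, (s - ζ) ^ (q - 1) * ζ ^ a =
      Real.Gamma q * Real.Gamma (a + 1) / Real.Gamma (a + q + 1) * s ^ (a + q) := by
  rcases hs.eq_or_lt with rfl | hs
  · rw [intervalIntegral.integral_same, Real.zero_rpow (by positivity), mul_zero]
  have key := Complex.betaIntegral_scaled ((a + 1 : ℝ) : ℂ) (q : ℂ) hs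
  rw [Complex.betaIntegral_eq_Gamma_mul_div _ _ (by simpa using by positivity) (by simpa)] at key
  have e : (∫ ζ in (0:ℝ)..s, (ζ : ℂ) ^ (((a + 1 : ℝ) : ℂ) - 1) * ((s : ℂ) - ζ) ^ ((q : ℂ) - 1))
      = ∫ ζ in (0:ℝ)..s, (((s - ζ) ^ (q - 1) * ζ ^ a : ℝ) : ℂ) := by
    refine intervalIntegral.integral_congr fun ζ hζ => ?_
    rw [uIcc_of_le hs.le] at hζ
    rw [Complex.ofReal_mul, Complex.ofReal_cpow (by linarith [hζ.2]), Complex.ofReal_cpow hζ.1,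
      mul_comm]
    push_cast
    congr 2
    ring
  rw [e, intervalIntegral.integral_ofReal, ← Complex.ofReal_add, ← Complex.ofReal_one,
    ← Complex.ofReal_sub, ← Complex.ofReal_cpow hs.le, Complex.Gamma_ofReal, Complex.Gamma_ofReal,
    Complex.Gamma_ofReal] at key
  norm_cast at key
  rw [key, show a + 1 + q - 1 = a + q by ring, show a + 1 + q = a + q + 1 by ring]
  ring

theorem intervalIntegrable_kernel {q : ℝ} (hq : 0 < q) (s : ℝ) :
    IntervalIntegrable (fun ζ : ℝ => (s - ζ) ^ (q - 1)) MeasureTheory.volume 0 s := by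
  have := (intervalIntegral.intervalIntegrable_rpow' (a := 0) (b := s)
    (show -1 < q - 1 by linarith)).comp_sub_left s
  simpa using this.symm

/-- Log-convexity of `Γ` on `[x + q, x + q + 1]`, the source of the superexponential growth of the
Mittag-Leffler denominators. -/
theorem Gamma_add_one_le {q x : ℝ} (hq0 : 0 < q) (hq1 : q ≤ 1) (hx : 0 ≤ x) :
    Real.Gamma (x + 1) ≤ Real.Gamma (x + q + 1) / (x + q) ^ q := by
  have hxq : 0 < x + q := by positivity
  rcases hq1.eq_or_lt with rfl | hq1
  · rw [Real.rpow_one, Real.Gamma_add_one hxq.ne']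
    field_simp
    exact le_rfl
  have hG : 0 < Real.Gamma (x + q + 1) := Real.Gamma_pos_of_pos (by positivity)
  have h := Real.Gamma_mul_add_mul_le_rpow_Gamma_mul_rpow_Gamma (s := x + q) (t := x + q + 1)
    (a := q) (b := 1 - q) hxq (by positivity) hq0 (by linarith) (by ring)
  rw [show q * (x + q) + (1 - q) * (x + q + 1) = x + 1 by ring] at h
  have h2 : Real.Gamma (x + q) = Real.Gamma (x + q + 1) / (x + q) := by
    rw [Real.Gamma_add_one hxq.ne']
    field_simp
  rw [h2, Real.div_rpow hG.le hxq.le, div_mul_eq_mul_div, ← Real.rpow_add hG] at h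
  simpa using h

theorem summable_mlE {q : ℝ} (hq0 : 0 < q) (hq1 : q ≤ 1) (t : ℝ) :
    Summable fun n : ℕ => t ^ n / Real.Gamma (n * q + 1) := by
  rcases eq_or_ne t 0 with rfl | ht
  · refine summable_of_ne_finset_zero (s := {0}) fun n hn => ?_
    rw [zero_pow (by simpa using hn), zero_div]
  have hpos : ∀ n : ℕ, 0 < Real.Gamma (n * q + 1) := fun n =>
    Real.Gamma_pos_of_pos (by positivity)
  refine summable_of_ratio_test_tendsto_lt_one (l := 0) one_pos
    (Filter.Eventually.of_forall fun n => (div_ne_zero (pow_ne_zero _ ht) (hpos n).ne')) ?_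
  have hlim : Filter.Tendsto (fun n : ℕ => |t| * ((((n : ℝ) * q + q) ^ q)⁻¹)) Filter.atTop
      (nhds (|t| * 0)) := by
    refine Filter.Tendsto.const_mul _ (Filter.Tendsto.inv_tendsto_atTop
      ((tendsto_rpow_atTop hq0).comp ?_))
    exact Filter.tendsto_atTop_add_const_right _ _
      (tendsto_natCast_atTop_atTop.atTop_mul_const hq0)
  rw [mul_zero] at hlim
  refine squeeze_zero (fun n => by positivity) (fun n => ?_) hlim
  have h := Gamma_add_one_le hq0 hq1 (x := n * q) (by positivity)
  have hn := hpos n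
  have hn1 := hpos (n + 1)
  have hc : (((n + 1 : ℕ) : ℝ)) * q + 1 = n * q + q + 1 := by push_cast; ring
  rw [hc] at hn1 ⊢
  have hp : 0 < ((n : ℝ) * q + q) ^ q := by positivity
  rw [le_div_iff₀ hp] at h
  rw [norm_div, norm_div, norm_pow, norm_pow, Real.norm_eq_abs, Real.norm_of_nonneg hn.le,
    Real.norm_of_nonneg hn1.le, pow_succ]
  have ht' : 0 < |t| := abs_pos.mpr ht
  rw [div_div_div_eq, div_le_iff₀ (by positivity)]
  have : |t| * (((n : ℝ) * q + q) ^ q)⁻¹ * (Real.Gamma (n * q + q + 1) * |t| ^ n) =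
      |t| ^ n * |t| * (Real.Gamma (n * q + q + 1) / ((n : ℝ) * q + q) ^ q) := by
    field_simp
  rw [this]
  exact mul_le_mul_of_nonneg_left ((le_div_iff₀ hp).mpr h) (by positivity)

/-- The fractional integral of order `q`, scaled by `β`, sends the `k`-th Mittag-Leffler term to the
`(k+1)`-st. -/
theorem kernel_mlTerm {q s β : ℝ} (hq : 0 < q) (hs : 0 ≤ s) (k : ℕ) :
    β / Real.Gamma q * ∫ ζ in (0:ℝ)..s,
        (s - ζ) ^ (q - 1) * ((β * ζ ^ q) ^ k / Real.Gamma (k * q + 1)) =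
      (β * s ^ q) ^ (k + 1) / Real.Gamma ((k + 1 : ℕ) * q + 1) := by
  have e : ∫ ζ in (0:ℝ)..s, (s - ζ) ^ (q - 1) * ((β * ζ ^ q) ^ k / Real.Gamma (k * q + 1)) =
      β ^ k / Real.Gamma (k * q + 1) * ∫ ζ in (0:ℝ)..s, (s - ζ) ^ (q - 1) * ζ ^ (q * k) := by
    rw [← intervalIntegral.integral_const_mul]
    refine intervalIntegral.integral_congr fun ζ hζ => ?_
    rw [uIcc_of_le hs] at hζ
    rw [mul_pow, Real.rpow_mul_natCast hζ.1]
    ring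
  have h1 : Real.Gamma (k * q + 1) ≠ 0 := (Real.Gamma_pos_of_pos (by positivity)).ne'
  have h2 : Real.Gamma q ≠ 0 := (Real.Gamma_pos_of_pos hq).ne'
  rw [e, integral_kernel_mul_rpow hq (by positivity) hs, mul_pow, ← Real.rpow_mul_natCast hs,
    show ((k + 1 : ℕ) : ℝ) * q + 1 = q * k + q + 1 by push_cast; ring,
    show q * ((k + 1 : ℕ) : ℝ) = q * k + q by push_cast; ring, mul_comm q (k : ℝ), pow_succ]
  field_simp

/-! ### Fractional Gronwall inequality -/

/-- Fractional Gronwall inequality with a constant forcing term: iterating the hypothesis bounds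
`y` by a partial Mittag-Leffler sum plus a multiple of the next term, which tends to zero. -/
theorem fractional_gronwall {q S B β : ℝ} (hq0 : 0 < q) (hq1 : q ≤ 1) (hS : 0 ≤ S) (hβ : 0 ≤ β)
    {y : ℝ → ℝ} (hy : ContinuousOn y (Icc 0 S))
    (hle : ∀ s ∈ Icc (0:ℝ) S,
      y s ≤ B + β / Real.Gamma q * ∫ ζ in (0:ℝ)..s, (s - ζ) ^ (q - 1) * y ζ) :
    y S ≤ B * mlE q (β * S ^ q) := by
  obtain ⟨M, hM⟩ := (isCompact_Icc.image_of_continuousOn hy).bddAbove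
  have hΓ : 0 < Real.Gamma q := Real.Gamma_pos_of_pos hq0
  let m : ℕ → ℝ → ℝ := fun k ζ => (β * ζ ^ q) ^ k / Real.Gamma (k * q + 1)
  have hmc : ∀ k, Continuous (m k) := fun k =>
    ((continuous_const.mul (Real.continuous_rpow_const hq0.le)).pow k).div_const _
  have hmi : ∀ k s, IntervalIntegrable (fun ζ : ℝ => (s - ζ) ^ (q - 1) * m k ζ)
      MeasureTheory.volume 0 s := fun k s =>
    (intervalIntegrable_kernel hq0 s).mul_continuousOn (hmc k).continuousOn
  have hsi : ∀ n s, IntervalIntegrable (fun ζ : ℝ => ∑ k ∈ Finset.range n,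
      (s - ζ) ^ (q - 1) * m k ζ) MeasureTheory.volume 0 s := fun n s => by
    simpa only [Finset.mul_sum] using (intervalIntegrable_kernel hq0 s).mul_continuousOn
      (continuous_finsetSum (Finset.range n) fun k _ => hmc k).continuousOn
  have iter : ∀ n : ℕ, ∀ s ∈ Icc (0:ℝ) S,
      y s ≤ B * ∑ k ∈ Finset.range n, m k s + M * m n s := by
    intro n
    induction n with
    | zero =>
      intro s hs
      have := hM (mem_image_of_mem y hs)
      simpa [m] using this
    | succ n ih =>
      intro s hs
      have hsub : Icc 0 s ⊆ Icc 0 S := Icc_subset_Icc_right hs.2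
      have hint : ∫ ζ in (0:ℝ)..s, (s - ζ) ^ (q - 1) * y ζ ≤
          ∫ ζ in (0:ℝ)..s, (B * ∑ k ∈ Finset.range n, (s - ζ) ^ (q - 1) * m k ζ +
            M * ((s - ζ) ^ (q - 1) * m n ζ)) := by
        refine intervalIntegral.integral_mono_on hs.1
          ((intervalIntegrable_kernel hq0 s).mul_continuousOn ?_)
          (IntervalIntegrable.add (IntervalIntegrable.const_mul ?_ _)
            ((hmi n s).const_mul _)) fun ζ hζ => ?_
        · rw [uIcc_of_le hs.1]
          exact hy.mono hsub
        · exact hsi n s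
        · have h0 : 0 ≤ (s - ζ) ^ (q - 1) := Real.rpow_nonneg (by linarith [hζ.2]) _
          refine (mul_le_mul_of_nonneg_left (ih ζ (hsub hζ)) h0).trans_eq ?_
          rw [← Finset.mul_sum]
          ring
      have heq : β / Real.Gamma q *
          ∫ ζ in (0:ℝ)..s, (B * ∑ k ∈ Finset.range n, (s - ζ) ^ (q - 1) * m k ζ +
            M * ((s - ζ) ^ (q - 1) * m n ζ)) =
          B * ∑ k ∈ Finset.range n, m (k + 1) s + M * m (n + 1) s := by
        rw [intervalIntegral.integral_add, intervalIntegral.integral_const_mul,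
          intervalIntegral.integral_const_mul, intervalIntegral.integral_finsetSum, mul_add,
          mul_left_comm, mul_left_comm _ M, Finset.mul_sum]
        · simp only [m]
          rw [kernel_mlTerm hq0 hs.1]
          congr 2
          exact Finset.sum_congr rfl fun k _ => kernel_mlTerm hq0 hs.1 k
        · exact fun k _ => hmi k s
        · refine IntervalIntegrable.const_mul ?_ _
          exact hsi n s
        · exact (hmi n s).const_mul _
      have h0 : m 0 s = 1 := by simp [m]
      calc y s ≤ B + β / Real.Gamma q * ∫ ζ in (0:ℝ)..s, (s - ζ) ^ (q - 1) * y ζ := hle s hs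
        _ ≤ B + (B * ∑ k ∈ Finset.range n, m (k + 1) s + M * m (n + 1) s) := by
          rw [← heq]
          gcongr
        _ = _ := by rw [Finset.sum_range_succ', h0]; ring
  have hsum := summable_mlE hq0 hq1 (β * S ^ q)
  have hlim := (hsum.hasSum.tendsto_sum_nat.const_mul B).add
    (hsum.tendsto_atTop_zero.const_mul M)
  rw [mul_zero, add_zero] at hlim
  exact ge_of_tendsto' hlim fun n => iter n S ⟨hS, le_rfl⟩

/-! ### Sensitivity of the quasi-variational inequality -/

theorem proj_spec {H : Type*} [NormedAddCommGroup H] [InnerProductSpace ℝ H] [CompleteSpace H]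
    {C : Set H} (hne : C.Nonempty) (hcl : IsClosed C) (hcv : Convex ℝ C) (x : H) :
    proj C x ∈ C ∧ ∀ v ∈ C, 0 ≤ ⟪proj C x - x, v - proj C x⟫ := by
  have hex : ∃ w, w ∈ C ∧ ∀ v ∈ C, 0 ≤ ⟪w - x, v - w⟫ := by
    obtain ⟨w, hw, hmin⟩ := exists_norm_eq_iInf_of_complete_convex hne hcl.isComplete hcv x
    refine ⟨w, hw, fun v hv => ?_⟩
    have := (norm_eq_iInf_iff_real_inner_le_zero hcv hw).1 hmin v hv
    rw [← neg_sub x w, inner_neg_left]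
    linarith
  exact Classical.epsilon_spec hex

theorem proj_eq {H : Type*} [NormedAddCommGroup H] [InnerProductSpace ℝ H] [CompleteSpace H]
    {C : Set H} (hcl : IsClosed C) (hcv : Convex ℝ C) {x w : H}
    (hw : w ∈ C) (hvi : ∀ v ∈ C, 0 ≤ ⟪w - x, v - w⟫) : proj C x = w := by
  obtain ⟨hp, hpv⟩ := proj_spec ⟨w, hw⟩ hcl hcv x
  have h1 := hvi _ hp
  have h2 := hpv w hw
  have h3 : ⟪w - x, proj C x - w⟫ + ⟪proj C x - x, w - proj C x⟫ =
      -⟪proj C x - w, proj C x - w⟫ := by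
    rw [← neg_sub (proj C x) w, inner_neg_right, ← sub_eq_add_neg, ← inner_sub_left,
      sub_sub_sub_cancel_right, ← neg_sub (proj C x) w, inner_neg_left]
  have h4 : ⟪proj C x - w, proj C x - w⟫ ≤ 0 := by linarith
  rw [real_inner_self_eq_norm_sq] at h4
  exact sub_eq_zero.1 (norm_eq_zero.1 (by nlinarith [norm_nonneg (proj C x - w)]))

/-- Passage from the linear estimate `d ≤ (l/η) D + lK (1 + l/η) d` to the constants `κ` and `L`:
with `R = √(l² + η²/2)` one has `L = 4 lK² R (R + l) / η²`, and Young's inequality with weights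
`4` and `4/3` gives `d² ≤ κ D² + L d²`. -/
theorem le_sqrt_kconst_mul {l η lK d D : ℝ} (hl : 0 < l) (hη : 0 < η)
    (hL : Lconst lK l η < 1) (hd : 0 ≤ d) (hD : 0 ≤ D)
    (h : η * d ≤ l * D + lK * (η + l) * d) :
    d ≤ Real.sqrt (kconst l η / (1 - Lconst lK l η)) * D := by
  obtain ⟨R, hR⟩ : ∃ R, R = Real.sqrt (l ^ 2 + η ^ 2 / 2) := ⟨_, rfl⟩
  have hR0 : 0 < R := hR ▸ Real.sqrt_pos.2 (by positivity)
  have hR2 : R ^ 2 = l ^ 2 + η ^ 2 / 2 := by rw [hR]; exact Real.sq_sqrt (by positivity)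
  have hLe : Lconst lK l η = 4 * lK ^ 2 * R * (R + l) / η ^ 2 := by
    have : Real.sqrt (4 * l ^ 2 + 2 * η ^ 2) = 2 * R := by
      rw [show 4 * l ^ 2 + 2 * η ^ 2 = (2 * R) ^ 2 by nlinarith]
      exact Real.sqrt_sq (by positivity)
    rw [Lconst, this, show l * (2 * R) + 2 * l ^ 2 + η ^ 2 = 2 * R * (R + l) by nlinarith]
    ring
  have hκe : kconst l η = 2 * l * (R + l) ^ 2 / (η ^ 2 * R) := by rw [kconst, ← hR]
  have hκ0 : 0 ≤ kconst l η := by rw [hκe]; positivity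
  have hκ : 4 * l ^ 2 ≤ kconst l η * η ^ 2 := by
    rw [hκe, show 2 * l * (R + l) ^ 2 / (η ^ 2 * R) * η ^ 2 = 2 * l * (R + l) ^ 2 / R by
      field_simp, le_div_iff₀ hR0]
    nlinarith [mul_nonneg hl.le (sq_nonneg R), mul_nonneg hl.le (sq_nonneg l)]
  have hLη : 4 / 3 * (lK * (η + l)) ^ 2 ≤ Lconst lK l η * η ^ 2 := by
    rw [hLe, div_mul_cancel₀ _ (by positivity)]
    -- Cauchy-Schwarz: `(η + l)² ≤ 3 R²`
    have h3 : (η + l) ^ 2 ≤ 3 * R ^ 2 := by nlinarith [sq_nonneg (η - 2 * l)]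
    have := mul_le_mul_of_nonneg_left h3 (sq_nonneg lK)
    nlinarith [mul_nonneg (sq_nonneg lK) (mul_pos hR0 hl).le]
  have hsq : η ^ 2 * d ^ 2 ≤ η ^ 2 * (kconst l η * D ^ 2 + Lconst lK l η * d ^ 2) := by
    have h1 : (η * d) ^ 2 ≤ (l * D + lK * (η + l) * d) ^ 2 := by gcongr
    have h2 := mul_le_mul_of_nonneg_right hκ (sq_nonneg D)
    have h3 := mul_le_mul_of_nonneg_right hLη (sq_nonneg d)
    nlinarith [sq_nonneg (3 * (l * D) - lK * (η + l) * d)]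
  have hsq' := le_of_mul_le_mul_left hsq (by positivity)
  have hL' : 0 < 1 - Lconst lK l η := by linarith
  refine le_of_sq_le_sq ?_ (by positivity)
  rw [mul_pow, Real.sq_sqrt (by positivity), div_mul_eq_mul_div, le_div_iff₀ hL']
  linarith

/-- Lipschitz dependence of the quasi-variational solution on the parameter. The solution `u₁` is
`P_{K(u₁)}[u₁ - ρ G(x₁, u₁)]` for every `ρ > 0`; its competitor `P_{K(u₂)}[u₁ - ρ G(x₁, u₁)]` lies
within `lK ‖u₁ - u₂‖` of `u₁`, and is compared with `u₂` by strong pseudomonotonicity on `K(u₂)`.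
Letting `ρ → ∞` yields the estimate. -/
theorem qvi_sensitivity
    {H₁ H₂ : Type*} [NormedAddCommGroup H₁]
    [NormedAddCommGroup H₂] [InnerProductSpace ℝ H₂] [CompleteSpace H₂]
    {Ω : Set H₂} {K : H₂ → Set H₂} (hKcl : ∀ u, IsClosed (K u)) (hKcv : ∀ u, Convex ℝ (K u))
    (hKΩ : ∀ u ∈ Ω, K u ⊆ Ω) {G : H₁ → H₂ → H₂} {l η lK : ℝ} (hl : 0 < l) (hη : 0 < η)
    (hGLip : ∀ (x₁ x₂ : H₁), ∀ u₁ ∈ Ω, ∀ u₂ ∈ Ω,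
      ‖G x₂ u₂ - G x₁ u₁‖ ≤ l * (‖x₂ - x₁‖ + ‖u₂ - u₁‖))
    (hGpm : ∀ (x : H₁), ∀ u ∈ Ω, ∀ u₁ ∈ K u, ∀ u₂ ∈ K u,
      0 ≤ ⟪G x u₂, u₁ - u₂⟫ → η * ‖u₁ - u₂‖ ^ 2 ≤ ⟪G x u₁, u₁ - u₂⟫)
    (hlK : 0 ≤ lK)
    (hKproj : ∀ u₁ ∈ Ω, ∀ u₂ ∈ Ω, ∀ ϖ : H₂,
      ‖proj (K u₂) ϖ - proj (K u₁) ϖ‖ ≤ lK * ‖u₂ - u₁‖)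
    {x₁ x₂ : H₁} {u₁ u₂ : H₂} (hu₁ : u₁ ∈ Ω) (hu₂ : u₂ ∈ Ω) (hk₁ : u₁ ∈ K u₁) (hk₂ : u₂ ∈ K u₂)
    (hv₁ : ∀ v ∈ K u₁, 0 ≤ ⟪G x₁ u₁, v - u₁⟫) (hv₂ : ∀ v ∈ K u₂, 0 ≤ ⟪G x₂ u₂, v - u₂⟫) :
    η * ‖u₂ - u₁‖ ≤ l * ‖x₂ - x₁‖ + lK * (η + l) * ‖u₂ - u₁‖ := by
  set d := ‖u₂ - u₁‖ with hd
  set D := ‖x₂ - x₁‖ with hD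
  have hd0 : 0 ≤ d := norm_nonneg _
  have hD0 : 0 ≤ D := norm_nonneg _
  have main : ∀ r : ℝ, 0 < r → η * d ≤ l * D + lK * (η + l) * d + r * (lK * d) := by
    intro r hr
    -- `r = ρ⁻¹`
    obtain ⟨w, hw⟩ : ∃ w, w = proj (K u₂) (u₁ - r⁻¹ • G x₁ u₁) := ⟨_, rfl⟩
    obtain ⟨hwK, hwv⟩ := proj_spec ⟨u₂, hk₂⟩ (hKcl u₂) (hKcv u₂) (u₁ - r⁻¹ • G x₁ u₁)
    rw [← hw] at hwK hwv
    have hp₁ : proj (K u₁) (u₁ - r⁻¹ • G x₁ u₁) = u₁ := by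
      refine proj_eq (hKcl _) (hKcv _) hk₁ fun v hv => ?_
      rw [sub_sub_cancel, inner_smul_left]
      exact mul_nonneg (by simpa using hr.le) (hv₁ v hv)
    have ha : ‖w - u₁‖ ≤ lK * d := by
      have := hKproj u₁ hu₁ u₂ hu₂ (u₁ - r⁻¹ • G x₁ u₁)
      rwa [hp₁, ← hw] at this
    have h1 := hGpm x₂ u₂ hu₂ w hwK u₂ hk₂ (hv₂ w hwK)
    have h2 : ⟪G x₁ u₁, w - u₂⟫ ≤ r * (lK * d * ‖w - u₂‖) := by
      have h := hwv u₂ hk₂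
      rw [sub_sub_eq_add_sub, add_sub_right_comm, inner_add_left, inner_smul_left,
        ← neg_sub w u₂, inner_neg_right, inner_neg_right] at h
      have hc : -⟪w - u₁, w - u₂⟫ ≤ lK * d * ‖w - u₂‖ := by
        have := neg_le_of_abs_le (abs_real_inner_le_norm (w - u₁) (w - u₂))
        have := mul_le_mul_of_nonneg_right ha (norm_nonneg (w - u₂))
        linarith
      have h' : r⁻¹ * ⟪G x₁ u₁, w - u₂⟫ ≤ lK * d * ‖w - u₂‖ := by
        simp only [conj_trivial] at h
        linarith
      rwa [inv_mul_le_iff₀ hr] at h'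
    have h3 : ⟪G x₂ w - G x₁ u₁, w - u₂⟫ ≤ l * (D + lK * d) * ‖w - u₂‖ := by
      refine (real_inner_le_norm _ _).trans ?_
      refine mul_le_mul_of_nonneg_right ?_ (norm_nonneg _)
      refine (hGLip x₁ x₂ u₁ hu₁ w (hKΩ u₂ hu₂ hwK)).trans ?_
      gcongr
    rw [inner_sub_left] at h3
    have h4 : η * ‖w - u₂‖ ≤ l * (D + lK * d) + r * (lK * d) := by
      rcases (norm_nonneg (w - u₂)).eq_or_lt with h0 | h0
      · rw [← h0, mul_zero]
        positivity
      · refine le_of_mul_le_mul_right ?_ h0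
        nlinarith
    have h5 : d ≤ ‖w - u₁‖ + ‖w - u₂‖ := by
      have := norm_sub_le (w - u₁) (w - u₂)
      rwa [sub_sub_sub_cancel_left] at this
    have h6 := mul_le_mul_of_nonneg_left (h5.trans (add_le_add_left ha _)) hη.le
    linarith
  refine le_of_forall_pos_le_add fun ε hε => ?_
  have hc : 0 < lK * d + 1 := by positivity
  have := main (ε / (lK * d + 1)) (by positivity)
  have h7 : ε / (lK * d + 1) * (lK * d) ≤ ε := by
    rw [div_mul_eq_mul_div, div_le_iff₀ hc]
    nlinarith
  linarith

/-! ### Stability -/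

/-- Corollary 4.2: generalized Mittag-Leffler-Hyers-Ulam-Rassias stability of the
NFDQCP with respect to a nondecreasing nonnegative function φ. -/
theorem nfdqcp_gmlhur_stability
    {H₁ H₂ : Type*} [NormedAddCommGroup H₁] [InnerProductSpace ℝ H₁] [CompleteSpace H₁]
    [NormedAddCommGroup H₂] [InnerProductSpace ℝ H₂] [CompleteSpace H₂]
    (T : ℝ) (hT : 0 < T) (q : ℝ) (hq : q ∈ Ioc (0:ℝ) 1) (x₀ : H₁)
    -- Ω is a nonempty closed convex cone
    (Ω : Set H₂) (hΩne : Ω.Nonempty) (hΩcl : IsClosed Ω) (hΩcv : Convex ℝ Ω)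
    (hΩcone : ∀ w ∈ Ω, ∀ c : ℝ, 0 ≤ c → c • w ∈ Ω)
    -- K(u) = φ₀(u) + Ω
    (φ₀ : H₂ → H₂) (hφ₀ : ∀ w ∈ Ω, φ₀ w ∈ Ω)
    (K : H₂ → Set H₂) (hKdef : ∀ u : H₂, K u = (fun w => φ₀ u + w) '' Ω)
    (G : ℝ → H₁ → H₂ → H₂) (lG ηG : ℝ) (hlG : 0 < lG) (hηG : 0 < ηG)
    -- (H₁)
    (hGLip : ∀ s₁ ∈ Icc (0:ℝ) T, ∀ s₂ ∈ Icc (0:ℝ) T, ∀ (x₁ x₂ : H₁), ∀ u₁ ∈ Ω, ∀ u₂ ∈ Ω,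
      ‖G s₂ x₂ u₂ - G s₁ x₁ u₁‖ ≤ lG * (|s₂ - s₁| + ‖x₂ - x₁‖ + ‖u₂ - u₁‖))
    (hGpm : ∀ s ∈ Icc (0:ℝ) T, ∀ (x : H₁), ∀ u ∈ Ω, ∀ u₁ ∈ K u, ∀ u₂ ∈ K u,
      0 ≤ ⟪G s x u₂, u₁ - u₂⟫ → ηG * ‖u₁ - u₂‖ ^ 2 ≤ ⟪G s x u₁, u₁ - u₂⟫)
    -- (H₂)
    (lK : ℝ) (hlK : 0 ≤ lK)
    (hKproj : ∀ u₁ ∈ Ω, ∀ u₂ ∈ Ω, ∀ ϖ : H₂,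
      ‖proj (K u₂) ϖ - proj (K u₁) ϖ‖ ≤ lK * ‖u₂ - u₁‖)
    -- (H₃)
    (g : ℝ → H₁ → H₂ → H₁) (lg : ℝ) (hlg : 0 < lg)
    (hgc : ContinuousOn (fun p : ℝ × H₁ × H₂ => g p.1 p.2.1 p.2.2)
      (Icc (0:ℝ) T ×ˢ (univ : Set (H₁ × H₂))))
    (hgLip : ∀ s ∈ Icc (0:ℝ) T, ∀ (x₁ x₂ : H₁) (u₁ u₂ : H₂),
      ‖g s x₂ u₂ - g s x₁ u₁‖ ≤ lg * (‖x₂ - x₁‖ + ‖u₂ - u₁‖))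
    -- (H₄)
    (f : ℝ → H₁ → H₁) (lf : ℝ) (hlf : 0 < lf)
    (hfc : ContinuousOn (fun p : ℝ × H₁ => f p.1 p.2) (Icc (0:ℝ) T ×ˢ (univ : Set H₁)))
    (hfLip : ∀ s ∈ Icc (0:ℝ) T, ∀ x₁ x₂ : H₁, ‖f s x₂ - f s x₁‖ ≤ lf * ‖x₂ - x₁‖)
    -- (H₅')
    (ψ : (ℝ → H₁) → H₁) (γ lψ : ℝ) (hγ : 0 < γ) (hlψ0 : 0 < lψ) (hlψ1 : lψ < 1)
    (hψLip : ∀ y₁ y₂ : ℝ → H₁, ContinuousOn y₁ (Icc 0 T) → ContinuousOn y₂ (Icc 0 T) →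
      ‖ψ y₂ - ψ y₁‖ ≤ lψ * sSup ((fun s => Real.exp (-(γ * s)) * ‖y₂ s - y₁ s‖) '' Icc 0 T))
    (hsmall : lψ + (lf + xiconst lg lK lG ηG) / Real.Gamma q *
      sSup ((fun s => ∫ ζ in (0:ℝ)..s, (s - ζ) ^ (q - 1) * Real.exp (-(γ * (s - ζ)))) ''
        Icc (0:ℝ) T) < 1)
    -- L < 1
    (hL : Lconst lK lG ηG < 1)
    -- (x, u) is the (unique) solution of the NFDQCP
    (x : ℝ → H₁) (u : ℝ → H₂) (hxu : IsNFDQCPSol T q x₀ ψ f g G Ω φ₀ x u)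
    -- (z, υ, h): solution of the perturbed inequality system
    (z : ℝ → H₁) (hz : ContinuousOn z (Icc 0 T))
    (υ : ℝ → H₂) (hυc : ContinuousOn υ (Icc 0 T)) (hυΩ : ∀ s ∈ Icc (0:ℝ) T, υ s ∈ Ω)
    (h : ℝ → H₁) (hhc : ContinuousOn h (Icc 0 T))
    (hzeq : ∀ s ∈ Icc (0:ℝ) T,
      z s = z 0 + (Real.Gamma q)⁻¹ •
        ∫ ζ in (0:ℝ)..s, ((s - ζ) ^ (q - 1)) • (f ζ (z ζ) + g ζ (z ζ) (υ ζ) + h ζ))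
    (hυ : ∀ s ∈ Icc (0:ℝ) T,
      υ s ∈ (fun w => φ₀ (υ s) + w) '' Ω ∧
      (∀ v ∈ Ω, 0 ≤ ⟪G s (z s) (υ s), v⟫) ∧
      ⟪G s (z s) (υ s), υ s - φ₀ (υ s)⟫ = 0)
    (hz0 : z 0 = x₀ + ψ x)
    (φ : ℝ → ℝ) (hφc : ContinuousOn φ (Icc 0 T)) (hφ0 : ∀ s ∈ Icc (0:ℝ) T, 0 ≤ φ s)
    (hφmono : MonotoneOn φ (Icc 0 T))
    (hh : ∀ s ∈ Icc (0:ℝ) T, ‖h s‖ ≤ φ s) :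
    ∀ s ∈ Icc (0:ℝ) T,
      ‖z s - x s‖ ≤ T ^ q / Real.Gamma (q + 1) * φ s *
        mlE q ((lf + xiconst lg lK lG ηG) * s ^ q) := by
  obtain ⟨hq0, hq1⟩ := hq
  obtain ⟨hxc, huc, huΩ, hxeq, hu⟩ := hxu
  have hadd : ∀ a ∈ Ω, ∀ b ∈ Ω, a + b ∈ Ω := by
    intro a ha b hb
    have h1 := hΩcone _ (hΩcv ha hb (a := 1 / 2) (b := 1 / 2) (by norm_num) (by norm_num)
      (by norm_num)) 2 (by norm_num)
    rw [smul_add, smul_smul, smul_smul] at h1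
    simpa using h1
  have hKcl : ∀ w, IsClosed (K w) := fun w => by
    rw [hKdef]
    exact (Homeomorph.addLeft (φ₀ w)).isClosedMap _ hΩcl
  have hKcv : ∀ w, Convex ℝ (K w) := fun w => by
    rw [hKdef]
    exact hΩcv.translate _
  have hKΩ : ∀ w ∈ Ω, K w ⊆ Ω := by
    intro w hw v hv
    rw [hKdef] at hv
    obtain ⟨t, ht, rfl⟩ := hv
    exact hadd _ (hφ₀ w hw) _ ht
  -- complementarity over the cone gives the variational inequality over `K(w)`
  have hvi : ∀ (p : H₂) (w : H₂), (∀ v ∈ Ω, 0 ≤ ⟪p, v⟫) → ⟪p, w - φ₀ w⟫ = 0 →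
      ∀ v ∈ K w, 0 ≤ ⟪p, v - w⟫ := by
    intro p w hp h0 v hv
    rw [hKdef] at hv
    obtain ⟨t, ht, rfl⟩ := hv
    have e : φ₀ w + t - w = t - (w - φ₀ w) := by abel
    simp only [e, inner_sub_right p t, h0, sub_zero]
    exact hp t ht
  have hsens : ∀ s ∈ Icc (0:ℝ) T,
      ‖υ s - u s‖ ≤ Real.sqrt (kconst lG ηG / (1 - Lconst lK lG ηG)) * ‖z s - x s‖ := by
    intro s hs
    obtain ⟨hk₁, hd₁, ho₁⟩ := hu s hs
    obtain ⟨hk₂, hd₂, ho₂⟩ := hυ s hs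
    refine le_sqrt_kconst_mul hlG hηG hL (norm_nonneg _) (norm_nonneg _) ?_
    refine qvi_sensitivity (Ω := Ω) (K := K) (G := G s) hKcl hKcv hKΩ hlG hηG ?_ (hGpm s hs) hlK
      hKproj (huΩ s hs) (hυΩ s hs) (by rw [hKdef]; exact hk₁) (by rw [hKdef]; exact hk₂)
      (hvi _ _ hd₁ ho₁) (hvi _ _ hd₂ ho₂)
    intro x₁ x₂ u₁ hu₁ u₂ hu₂
    simpa using hGLip s hs s hs x₁ x₂ u₁ hu₁ u₂ hu₂
  set ξ := xiconst lg lK lG ηG with hξ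
  have hξ0 : 0 ≤ ξ := by
    rw [hξ, xiconst]
    positivity
  have hΓ : 0 < Real.Gamma q := Real.Gamma_pos_of_pos hq0
  have hFx : ContinuousOn (fun ζ => f ζ (x ζ) + g ζ (x ζ) (u ζ)) (Icc 0 T) :=
    (hfc.comp (continuousOn_id.prodMk hxc) fun ζ hζ => ⟨hζ, mem_univ _⟩).add
      (hgc.comp (continuousOn_id.prodMk (hxc.prodMk huc)) fun ζ hζ => ⟨hζ, mem_univ _⟩)
  have hFz : ContinuousOn (fun ζ => f ζ (z ζ) + g ζ (z ζ) (υ ζ) + h ζ) (Icc 0 T) :=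
    ((hfc.comp (continuousOn_id.prodMk hz) fun ζ hζ => ⟨hζ, mem_univ _⟩).add
      (hgc.comp (continuousOn_id.prodMk (hz.prodMk hυc)) fun ζ hζ => ⟨hζ, mem_univ _⟩)).add hhc
  have hyc : ContinuousOn (fun ζ => ‖z ζ - x ζ‖) (Icc 0 T) := (hz.sub hxc).norm
  have hpt : ∀ ζ ∈ Icc (0:ℝ) T,
      ‖(f ζ (z ζ) + g ζ (z ζ) (υ ζ) + h ζ) - (f ζ (x ζ) + g ζ (x ζ) (u ζ))‖ ≤
        (lf + ξ) * ‖z ζ - x ζ‖ + φ ζ := by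
    intro ζ hζ
    have e : (f ζ (z ζ) + g ζ (z ζ) (υ ζ) + h ζ) - (f ζ (x ζ) + g ζ (x ζ) (u ζ)) =
        (f ζ (z ζ) - f ζ (x ζ)) + (g ζ (z ζ) (υ ζ) - g ζ (x ζ) (u ζ)) + h ζ := by abel
    rw [e]
    refine norm_add₃_le.trans ?_
    have h1 := hfLip ζ hζ (x ζ) (z ζ)
    have h2 := hgLip ζ hζ (x ζ) (z ζ) (u ζ) (υ ζ)
    have h3 := mul_le_mul_of_nonneg_left (hsens ζ hζ) hlg.le
    have h4 := hh ζ hζ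
    rw [hξ, xiconst]
    linarith
  have hdiff : ∀ s ∈ Icc (0:ℝ) T, ‖z s - x s‖ ≤ (Real.Gamma q)⁻¹ *
      ∫ ζ in (0:ℝ)..s, (s - ζ) ^ (q - 1) * ((lf + ξ) * ‖z ζ - x ζ‖ + φ ζ) := by
    intro s hs
    have hsub : uIcc 0 s ⊆ Icc 0 T := by
      rw [uIcc_of_le hs.1]
      exact Icc_subset_Icc_right hs.2
    have hk := intervalIntegrable_kernel hq0 s
    have e : z s - x s = (Real.Gamma q)⁻¹ • ∫ ζ in (0:ℝ)..s, (s - ζ) ^ (q - 1) •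
        ((f ζ (z ζ) + g ζ (z ζ) (υ ζ) + h ζ) - (f ζ (x ζ) + g ζ (x ζ) (u ζ))) := by
      simp only [smul_sub ((_ : ℝ) ^ (q - 1))]
      rw [intervalIntegral.integral_sub (hk.smul_continuousOn (hFz.mono hsub))
        (hk.smul_continuousOn (hFx.mono hsub)), smul_sub, hzeq s hs, hxeq s hs, hz0]
      abel
    rw [e, norm_smul, Real.norm_of_nonneg (inv_nonneg.2 hΓ.le)]
    refine mul_le_mul_of_nonneg_left ?_ (inv_nonneg.2 hΓ.le)
    refine intervalIntegral.norm_integral_le_of_norm_le hs.1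
      (Filter.Eventually.of_forall fun ζ hζ => ?_)
      (hk.mul_continuousOn ((continuousOn_const.mul (hyc.mono hsub)).add (hφc.mono hsub)))
    have h0 : 0 ≤ (s - ζ) ^ (q - 1) := Real.rpow_nonneg (by linarith [hζ.2]) _
    rw [norm_smul, Real.norm_of_nonneg h0]
    exact mul_le_mul_of_nonneg_left (hpt ζ ⟨hζ.1.le, hζ.2.trans hs.2⟩) h0
  intro S hS
  have hST : Icc 0 S ⊆ Icc 0 T := Icc_subset_Icc_right hS.2
  refine fractional_gronwall (y := fun ζ => ‖z ζ - x ζ‖) hq0 hq1 hS.1 (by positivity)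
    (hyc.mono hST) fun s hs => ?_
  have hsT := hST hs
  have hsub : uIcc 0 s ⊆ Icc 0 T := by
    rw [uIcc_of_le hs.1]
    exact Icc_subset_Icc_right hsT.2
  have hk := intervalIntegrable_kernel hq0 s
  have hI := integral_kernel_mul_rpow (a := 0) hq0 le_rfl hs.1
  simp only [Real.rpow_zero, mul_one, zero_add, Real.Gamma_one] at hI
  have hφS := hφ0 S hS
  have hmono : ∫ ζ in (0:ℝ)..s, (s - ζ) ^ (q - 1) * ((lf + ξ) * ‖z ζ - x ζ‖ + φ ζ) ≤
      ∫ ζ in (0:ℝ)..s, ((lf + ξ) * ((s - ζ) ^ (q - 1) * ‖z ζ - x ζ‖) +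
        φ S * (s - ζ) ^ (q - 1)) := by
    refine intervalIntegral.integral_mono_on hs.1
      (hk.mul_continuousOn ((continuousOn_const.mul (hyc.mono hsub)).add (hφc.mono hsub)))
      (((hk.mul_continuousOn (hyc.mono hsub)).const_mul _).add (hk.const_mul _)) fun ζ hζ => ?_
    have h0 : 0 ≤ (s - ζ) ^ (q - 1) := Real.rpow_nonneg (by linarith [hζ.2]) _
    have h1 : φ ζ ≤ φ S :=
      hφmono ⟨hζ.1, hζ.2.trans hsT.2⟩ hS (hζ.2.trans hs.2)
    nlinarith [mul_le_mul_of_nonneg_left h1 h0]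
  rw [intervalIntegral.integral_add ((hk.mul_continuousOn (hyc.mono hsub)).const_mul _)
    (hk.const_mul _), intervalIntegral.integral_const_mul, intervalIntegral.integral_const_mul,
    hI] at hmono
  refine (hdiff s hsT).trans ((mul_le_mul_of_nonneg_left hmono (inv_nonneg.2 hΓ.le)).trans ?_)
  have hsq : s ^ q ≤ T ^ q := Real.rpow_le_rpow hs.1 hsT.2 hq0.le
  have hΓ1 : 0 < Real.Gamma (q + 1) := Real.Gamma_pos_of_pos (by positivity)
  have hB : s ^ q / Real.Gamma (q + 1) * φ S ≤ T ^ q / Real.Gamma (q + 1) * φ S := by gcongr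
  refine le_trans (le_of_eq ?_) (add_le_add_left hB _)
  field_simp
  ring
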